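/- Let λ > 0, let F : ℝ³ → ℝ and G : ℝ³ → ℝ³ be C^∞ and 1-periodic in the second and third variables, and suppose G₁(x,y,z) = 0 whenever x ∈ {0,1}. Then there exist H : ℝ³ → ℝ and M : ℝ³ → ℝ³, C^∞ and 1-periodic in the second and third variables, such that ∂₁H(x,y,z) = 0 and M₁(x,y,z) = 0 whenever x ∈ {0,1}, and such that λ H − ∂_i M_i = F and λ M_i − ∂_i H = G_i for every i, at all points of [0,1]×ℝ². -/

import Mathlib

/-- Partial derivative in the `i`-th coordinate direction (coordinates `x,y,z ↔ 0,1,2`). -/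
noncomputable def pd (i : Fin 3) (f : (Fin 3 → ℝ) → ℝ) : (Fin 3 → ℝ) → ℝ :=
  fun p => fderiv ℝ f p (Pi.single i 1)

/-- 1-periodicity in the second and third variables. -/
def PerYZ (f : (Fin 3 → ℝ) → ℝ) : Prop :=
  ∀ p : Fin 3 → ℝ, f (p + Pi.single 1 1) = f p ∧ f (p + Pi.single 2 1) = f p

open Filter Topology



abbrev E3 := Fin 3 → ℝ

/-- complex partial derivative -/
noncomputable def cpd (i : Fin 3) (f : E3 → ℂ) : E3 → ℂ :=
  fun p => fderiv ℝ f p (Pi.single i 1)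

/-- the 1-form with components `c j` -/
noncomputable def form (c : Fin 3 → ℂ) : E3 →L[ℝ] ℂ :=
  ∑ j, (ContinuousLinearMap.proj (R := ℝ) (φ := fun _ : Fin 3 => ℝ) j).smulRight (c j)

theorem form_apply (c : Fin 3 → ℂ) (v : E3) : form c v = ∑ j, v j • c j := by
  simp [form]

theorem form_single (c : Fin 3 → ℂ) (i : Fin 3) : form c (Pi.single i 1) = c i := by
  rw [form_apply]
  rw [Finset.sum_eq_single i]
  · simp
  · intro j _ hj
    simp [Pi.single_eq_of_ne hj]
  · simp

theorem clm_eq_form (L : E3 →L[ℝ] ℂ) : L = form (fun j => L (Pi.single j 1)) := by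
  ext v
  · rw [form_apply]
    conv_lhs => rw [pi_eq_sum_univ' v]
    simp [map_sum]
  

theorem norm_form_le (c : Fin 3 → ℂ) : ‖form c‖ ≤ ∑ j, ‖c j‖ := by
  refine ContinuousLinearMap.opNorm_le_bound _ (by positivity) fun v => ?_
  rw [form_apply, Finset.sum_mul]
  refine (norm_sum_le _ _).trans (Finset.sum_le_sum fun j _ => ?_)
  rw [norm_smul, mul_comm]
  gcongr
  exact norm_le_pi_norm v j

theorem contDiff_form {n : WithTop ℕ∞} {c : Fin 3 → E3 → ℂ} (h : ∀ j, ContDiff ℝ n (c j)) :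
    ContDiff ℝ n (fun p => form (fun j => c j p)) := by
  unfold form
  refine ContDiff.sum fun j _ => ?_
  exact ContDiff.smulRight contDiff_const (h j)

theorem contDiff_of_pd_closed (P : (E3 → ℂ) → Prop)
    (hP : ∀ f, P f → ∃ g : Fin 3 → E3 → ℂ, (∀ j, P (g j)) ∧
      ∀ p, HasFDerivAt f (form (fun j => g j p)) p) {f : E3 → ℂ} (hf : P f) :
    ContDiff ℝ (⊤ : ℕ∞) f := by
  have key : ∀ n : ℕ, ∀ f, P f → ContDiff ℝ n f := by
    intro n
    induction n with
    | zero =>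
      intro f hf
      obtain ⟨g, -, hg⟩ := hP f hf
      exact contDiff_zero.2 (continuous_iff_continuousAt.2 fun p => (hg p).continuousAt)
    | succ n ih =>
      intro f hf
      obtain ⟨g, hgP, hg⟩ := hP f hf
      rw [Nat.cast_succ, contDiff_succ_iff_hasFDerivAt]
      exact ⟨_, contDiff_form fun j => ih _ (hgP j), hg⟩
  exact contDiff_infty.2 fun n => key n f hf

structure Good (f : E3 → ℂ) : Prop where
  smooth : ContDiff ℝ (⊤ : ℕ∞) f
  per1 : ∀ p, f (p + Pi.single 1 1) = f p
  per2 : ∀ p, f (p + Pi.single 2 1) = f p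
  supp : ∀ p : E3, 2 < |p 0| → f p = 0

theorem contDiff_cpd {f : E3 → ℂ} (hf : ContDiff ℝ (⊤ : ℕ∞) f) (i : Fin 3) :
    ContDiff ℝ (⊤ : ℕ∞) (cpd i f) :=
  (hf.fderiv_right (m := (⊤ : ℕ∞)) (by simp)).clm_apply contDiff_const

theorem fderiv_per {F : Type*} [NormedAddCommGroup F] [NormedSpace ℝ F] {f : E3 → F} {v : E3}
    (h : ∀ p, f (p + v) = f p) (p : E3) :
    fderiv ℝ f (p + v) = fderiv ℝ f p := by
  rw [← fderiv_comp_add_right]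
  congr 1
  funext q
  exact h q

theorem Good.cpd {f : E3 → ℂ} (hf : Good f) (i : Fin 3) : Good (cpd i f) where
  smooth := contDiff_cpd hf.smooth i
  per1 p := by unfold _root_.cpd; rw [fderiv_per hf.per1]
  per2 p := by unfold _root_.cpd; rw [fderiv_per hf.per2]
  supp p hp := by
    have ho : {q : E3 | 2 < |q 0|} ∈ 𝓝 p :=
      (isOpen_lt continuous_const (by fun_prop)).mem_nhds hp
    have : f =ᶠ[𝓝 p] fun _ => (0 : ℂ) := by
      filter_upwards [ho] with q hq using hf.supp q hq
    unfold _root_.cpd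
    rw [this.fderiv_eq]
    simp

theorem per_int {f : E3 → ℂ} {v : E3} (h : ∀ p, f (p + v) = f p) (n : ℤ) (p : E3) :
    f (p + (n : ℝ) • v) = f p := by
  have : Function.Periodic f v := h
  have := this.zsmul n p
  rwa [← Int.cast_smul_eq_zsmul ℝ] at this

theorem Good.bounded {f : E3 → ℂ} (hf : Good f) : ∃ C, ∀ p, ‖f p‖ ≤ C := by
  obtain ⟨C, hC⟩ := (isCompact_Icc (a := ![-2, 0, 0]) (b := ![2, 1, 1])).exists_bound_of_continuousOn
    (hf.smooth.continuous.continuousOn)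
  have hC0 : 0 ≤ C := (norm_nonneg _).trans
    (hC ![0, 0, 0] (by constructor <;> intro i <;> fin_cases i <;> simp))
  refine ⟨C, fun p => ?_⟩
  by_cases hp : 2 < |p 0|
  · rw [hf.supp p hp]; simpa
  · have h1 := per_int hf.per1 (-⌊p 1⌋) p
    have h2 := per_int hf.per2 (-⌊p 2⌋) (p + ((-⌊p 1⌋ : ℤ) : ℝ) • Pi.single 1 1)
    rw [← h1, ← h2]
    apply hC
    have := abs_le.1 (not_lt.1 hp)
    constructor <;> intro i <;> fin_cases i <;> simp <;>
      first | linarith [this.1, this.2] | linarith [Int.floor_le (p 1), Int.lt_floor_add_one (p 1)] | linarith [Int.floor_le (p 2), Int.lt_floor_add_one (p 2)]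

noncomputable def ch (m : ℤ) (t : ℝ) : ℂ := Complex.exp (-(2 * Real.pi * Complex.I * m * t))

theorem norm_ch (m : ℤ) (t : ℝ) : ‖ch m t‖ = 1 := by
  unfold ch
  rw [Complex.norm_exp]
  simp

theorem continuous_ch (m : ℤ) : Continuous (ch m) := by unfold ch; fun_prop

/-- projection on the m-th Fourier mode in direction i -/
noncomputable def KK (i : Fin 3) (m : ℤ) (f : E3 → ℂ) : E3 → ℂ :=
  fun p => ∫ t in (0 : ℝ)..1, ch m t * f (p + t • Pi.single i 1)

theorem KK_norm_le (i : Fin 3) (m : ℤ) {f : E3 → ℂ} {C : ℝ} (hC : ∀ p, ‖f p‖ ≤ C) (p : E3) :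
    ‖KK i m f p‖ ≤ C := by
  unfold KK
  have := intervalIntegral.norm_integral_le_of_norm_le_const (a := (0 : ℝ)) (b := 1) (C := C)
    (f := fun t : ℝ => ch m t * f (p + t • Pi.single i 1)) (fun t _ => by
      rw [norm_mul, norm_ch, one_mul]; exact hC _)
  simpa using this


theorem Good.fderiv_bounded {f : E3 → ℂ} (hf : Good f) : ∃ C, ∀ p, ‖fderiv ℝ f p‖ ≤ C := by
  choose C hC using fun j => (hf.cpd j).bounded
  refine ⟨∑ j, C j, fun q => ?_⟩
  rw [clm_eq_form (fderiv ℝ f q)]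
  exact (norm_form_le _).trans (Finset.sum_le_sum fun j _ => hC j q)


theorem continuous_form {α : Type*} [TopologicalSpace α] {c : α → Fin 3 → ℂ} (h : Continuous c) :
    Continuous (fun t => form (c t)) := by
  unfold form
  refine continuous_finsetSum _ fun j _ => ?_
  exact (ContinuousLinearMap.smulRightL ℝ E3 ℂ
    (ContinuousLinearMap.proj (R := ℝ) (φ := fun _ : Fin 3 => ℝ) j)).continuous.comp
    ((continuous_apply j).comp h)

theorem form_hasFDerivAt {f : E3 → ℂ} (hf : Differentiable ℝ f) (p : E3) :
    HasFDerivAt f (form (fun j => cpd j f p)) p := by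
  have := (hf p).hasFDerivAt
  rwa [clm_eq_form (fderiv ℝ f p)] at this


theorem hasFDerivAt_param {E V : Type*} [NormedAddCommGroup E] [NormedSpace ℝ E]
    [NormedAddCommGroup V] [NormedSpace ℝ V] [CompleteSpace V] (g : ℝ → E → V) (g' : ℝ → E → E →L[ℝ] V)
    (C : ℝ) (hg : ∀ q, Continuous fun t => g t q) (hg' : ∀ q, Continuous fun t => g' t q)
    (hd : ∀ t q, HasFDerivAt (g t) (g' t q) q) (hC : ∀ t q, ‖g' t q‖ ≤ C) (p : E) :
    ∃ L : E →L[ℝ] V, HasFDerivAt (fun q => ∫ t in (0 : ℝ)..1, g t q) L p ∧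
      ∀ v, L v = ∫ t in (0 : ℝ)..1, g' t p v := by
  refine ⟨∫ t in (0 : ℝ)..1, g' t p, ?_, fun v => ?_⟩
  · refine intervalIntegral.hasFDerivAt_integral_of_dominated_of_fderiv_le (𝕜 := ℝ)
      (μ := MeasureTheory.volume) (a := 0) (b := 1) (s := Set.univ) (x₀ := p)
      (F := fun p (t : ℝ) => g t p)
      (F' := fun p (t : ℝ) => g' t p)
      (bound := fun _ => C) univ_mem ?_ ?_ ?_ ?_ ?_ ?_
    · exact Eventually.of_forall fun q => (hg q).aestronglyMeasurable
    · exact (hg p).intervalIntegrable _ _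
    · exact (hg' p).aestronglyMeasurable
    · exact Eventually.of_forall fun t _ q _ => hC t q
    · exact intervalIntegrable_const
    · exact Eventually.of_forall fun t _ q _ => hd t q
  · rw [ContinuousLinearMap.intervalIntegral_apply ((hg' p).intervalIntegrable _ _)]

theorem KK_hasFDerivAt (i : Fin 3) (m : ℤ) {f : E3 → ℂ} (hf : Good f) (p : E3) :
    HasFDerivAt (KK i m f) (form (fun j => KK i m (cpd j f) p)) p := by
  choose C hC using fun j => (hf.cpd j).bounded
  have hcont := hf.smooth.continuous
  have hcc := continuous_ch m
  have hfd : ∀ j, Continuous (cpd j f) := fun j => (hf.cpd j).smooth.continuous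
  have hcF : ∀ p : E3,
      Continuous (fun t : ℝ => form (fun j => ch m t * cpd j f (p + t • Pi.single i 1))) := by
    intro p
    refine continuous_form (continuous_pi fun j => ?_)
    have := hfd j
    fun_prop
  have h1 : ∀ (t : ℝ) (q : E3), HasFDerivAt (fun q : E3 => ch m t * f (q + t • Pi.single i 1))
        (form (fun j => ch m t * cpd j f (q + t • Pi.single i 1))) q := by
    intro t q
    have h1 : HasFDerivAt (fun q : E3 => f (q + t • Pi.single i 1))
        (form (fun j => cpd j f (q + t • Pi.single i 1))) q := by
        rw [hasFDerivAt_comp_add_right]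
        exact form_hasFDerivAt (hf.smooth.differentiable (by simp)) _
    have h2 := h1.const_mul (ch m t)
    convert! h2 using 1
    ext v
    simp [form_apply, Finset.mul_sum]
    refine Finset.sum_congr rfl fun j _ => ?_
    ring
  have h2 : ∀ (t : ℝ) (q : E3),
      ‖form (fun j => ch m t * cpd j f (q + t • Pi.single i 1))‖ ≤ ∑ j, C j := by
    intro t q
    refine (norm_form_le _).trans (Finset.sum_le_sum fun j _ => ?_)
    rw [norm_mul, norm_ch, one_mul]; exact hC _ _
  have h3 : ∀ q : E3, Continuous fun t : ℝ => ch m t * f (q + t • Pi.single i 1) := by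
    intro q; fun_prop
  obtain ⟨L, hL, hLv⟩ := hasFDerivAt_param _ _ _ h3 hcF h1 h2 p
  have hL2 : L = form (fun j => KK i m (cpd j f) p) := by
    rw [clm_eq_form L]
    congr 1
    funext j
    rw [hLv]
    simp only [form_single]
    rfl
  rw [← hL2]
  exact hL

theorem KK_good {i : Fin 3} (hi : i ≠ 0) (m : ℤ) {f : E3 → ℂ} (hf : Good f) :
    Good (KK i m f) where
  smooth := by
    refine contDiff_of_pd_closed (fun h => ∃ f, Good f ∧ h = KK i m f) ?_ ⟨f, hf, rfl⟩
    rintro _ ⟨f, hf, rfl⟩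
    exact ⟨fun j => KK i m (cpd j f), fun j => ⟨_, hf.cpd j, rfl⟩, KK_hasFDerivAt i m hf⟩
  per1 p := by
    unfold KK; congr 1; funext t
    rw [← hf.per1 (p + t • _)]; congr 2; abel
  per2 p := by
    unfold KK; congr 1; funext t
    rw [← hf.per2 (p + t • _)]; congr 2; abel
  supp p hp := by
    unfold KK
    rw [intervalIntegral.integral_congr (g := fun _ => 0)]
    · simp
    · intro t _
      simp only
      rw [hf.supp, mul_zero]
      simpa [Pi.single_apply, hi.symm] using hp

theorem cpd_KK (i : Fin 3) (m : ℤ) {f : E3 → ℂ} (hf : Good f) (j : Fin 3) :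
    cpd j (KK i m f) = KK i m (cpd j f) := by
  funext p
  unfold cpd
  rw [(KK_hasFDerivAt i m hf p).fderiv, form_single]
  rfl

theorem hasDerivAt_ch (m : ℤ) (t : ℝ) :
    HasDerivAt (ch m) (-(2 * Real.pi * Complex.I * m) * ch m t) t := by
  unfold ch
  have h : HasDerivAt (fun t : ℝ => -(2 * Real.pi * Complex.I * m * (t : ℂ)))
      (-(2 * Real.pi * Complex.I * m)) t := by
    have := (Complex.ofRealCLM.hasDerivAt (x := t)).const_mul (-(2 * Real.pi * Complex.I * m : ℂ))
    simpa using this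
  have := h.cexp
  convert! this using 1
  ring

theorem hasDerivAt_line {f : E3 → ℂ} (hf : Differentiable ℝ f) (i : Fin 3) (p : E3) (t : ℝ) :
    HasDerivAt (fun t : ℝ => f (p + t • Pi.single i 1)) (cpd i f (p + t • Pi.single i 1)) t := by
  have h1 : HasDerivAt (fun t : ℝ => p + t • (Pi.single i 1 : E3)) (Pi.single i 1) t := by
    simpa using ((hasDerivAt_id t).smul_const (Pi.single i 1 : E3)).const_add p
  exact (hf _).hasFDerivAt.comp_hasDerivAt t h1

theorem Good.per {f : E3 → ℂ} (hf : Good f) {i : Fin 3} (hi : i ≠ 0) (p : E3) :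
    f (p + Pi.single i 1) = f p := by
  fin_cases i
  · exact absurd rfl hi
  · exact hf.per1 p
  · exact hf.per2 p

theorem ch_one (m : ℤ) : ch m 1 = 1 := by
  unfold ch
  rw [Complex.exp_eq_one_iff]
  exact ⟨-m, by push_cast; ring⟩

theorem ch_zero (m : ℤ) : ch m 0 = 1 := by simp [ch]

theorem KK_cpd {i : Fin 3} (hi : i ≠ 0) (m : ℤ) {f : E3 → ℂ} (hf : Good f) (p : E3) :
    KK i m (cpd i f) p = 2 * Real.pi * Complex.I * m * KK i m f p := by
  have hcont := hf.smooth.continuous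
  have hcont' := (hf.cpd i).smooth.continuous
  have hcc := continuous_ch m
  have h := intervalIntegral.integral_mul_deriv_eq_deriv_mul (a := 0) (b := 1)
    (u := ch m) (v := fun t : ℝ => f (p + t • Pi.single i 1))
    (u' := fun t => -(2 * Real.pi * Complex.I * m) * ch m t)
    (v' := fun t : ℝ => cpd i f (p + t • Pi.single i 1))
    (fun t _ => hasDerivAt_ch m t)
    (fun t _ => hasDerivAt_line (hf.smooth.differentiable (by simp)) i p t)
    (Continuous.intervalIntegrable (by fun_prop) _ _)
    (Continuous.intervalIntegrable (by fun_prop) _ _)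
  unfold KK
  rw [h, ch_one, ch_zero, one_smul, zero_smul, add_zero, hf.per hi]
  simp only [mul_assoc, neg_mul, intervalIntegral.integral_neg, intervalIntegral.integral_const_mul]
  ring


noncomputable def wt (i : ℤ × ℤ) : ℝ := 1 + |(i.1 : ℝ)| + |(i.2 : ℝ)|

theorem one_le_wt (i : ℤ × ℤ) : 1 ≤ wt i := by
  unfold wt; linarith [abs_nonneg (i.1 : ℝ), abs_nonneg (i.2 : ℝ)]

theorem summable_int : Summable (fun m : ℤ => ((1 + |(m : ℝ)|) ^ 2)⁻¹) := by
  have h1 : Summable (fun n : ℕ => ((1 + |(n : ℝ)|) ^ 2)⁻¹) := by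
    have := (summable_nat_add_iff 1).2 (Real.summable_nat_pow_inv (p := 2).2 (by norm_num))
    refine this.congr fun n => ?_
    push_cast
    rw [abs_of_nonneg (Nat.cast_nonneg n), add_comm]
  refine Summable.of_nat_of_neg ?_ ?_
  · simpa using h1
  · simpa using h1

theorem summable_wt : Summable (fun i : ℤ × ℤ => (wt i ^ 4)⁻¹) := by
  have := summable_int.mul_of_nonneg summable_int (fun _ => by positivity) (fun _ => by positivity)
  refine Summable.of_nonneg_of_le (fun i => ?_) (fun i => ?_) this
  · have := one_le_wt i; positivity
  · rw [← mul_inv, ← mul_pow]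
    have ha := abs_nonneg (i.1 : ℝ)
    have hb := abs_nonneg (i.2 : ℝ)
    have : (1 + |(i.1 : ℝ)|) * (1 + |(i.2 : ℝ)|) ≤ wt i ^ 2 := by unfold wt; nlinarith
    have h2 : ((1 + |(i.1 : ℝ)|) * (1 + |(i.2 : ℝ)|)) ^ 2 ≤ wt i ^ 4 := by
      calc _ ≤ (wt i ^ 2) ^ 2 := by gcongr
        _ = _ := by ring
    gcongr

structure RD (a : ℤ × ℤ → ℝ → ℂ) : Prop where
  smooth : ∀ i, ContDiff ℝ (⊤ : ℕ∞) (a i)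
  bound : ∀ k N : ℕ, ∃ C : ℝ, ∀ i x, wt i ^ N * ‖iteratedDeriv k (a i) x‖ ≤ C

theorem KK_mul_le {i : Fin 3} (hi : i ≠ 0) (m : ℤ) {f : E3 → ℂ} (hf : Good f) (p : E3) :
    |(m : ℝ)| * ‖KK i m f p‖ ≤ ‖KK i m (cpd i f) p‖ := by
  rw [KK_cpd hi m hf]
  simp only [norm_mul, Complex.norm_I, Complex.norm_real, Complex.norm_intCast, Complex.norm_ofNat,
    mul_one]
  rw [Real.norm_of_nonneg Real.pi_pos.le]
  have h1 : 1 ≤ 2 * Real.pi := by linarith [Real.pi_gt_three]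
  have h2 : 0 ≤ |(m : ℝ)| * ‖KK i m f p‖ := by positivity
  nlinarith

theorem KK_decay {i : Fin 3} (hi : i ≠ 0) (N : ℕ) : ∀ f : E3 → ℂ, Good f →
    ∃ C : ℝ, ∀ (m : ℤ) p, (1 + |(m : ℝ)|) ^ N * ‖KK i m f p‖ ≤ C := by
  induction N with
  | zero =>
    intro f hf
    obtain ⟨C, hC⟩ := hf.bounded
    exact ⟨C, fun m p => by simpa using KK_norm_le i m hC p⟩
  | succ N ih =>
    intro f hf
    obtain ⟨C, hC⟩ := ih f hf
    obtain ⟨C', hC'⟩ := ih _ (hf.cpd i)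
    refine ⟨C + C', fun m p => ?_⟩
    have h1 := hC m p
    have h2 := hC' m p
    have h3 := KK_mul_le hi m hf p
    have h4 : 0 ≤ (1 + |(m : ℝ)|) ^ N := by positivity
    have h5 := mul_le_mul_of_nonneg_left h3 h4
    calc _ = (1 + |(m : ℝ)|) ^ N * ‖KK i m f p‖ +
          (1 + |(m : ℝ)|) ^ N * (|(m : ℝ)| * ‖KK i m f p‖) := by ring
      _ ≤ _ := by linarith

theorem KK_summable {i : Fin 3} (hi : i ≠ 0) {f : E3 → ℂ} (hf : Good f) (p : E3) :
    Summable (fun m => KK i m f p) := by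
  obtain ⟨C, hC⟩ := KK_decay hi 2 f hf
  refine Summable.of_norm_bounded (summable_int.mul_left C) fun m => ?_
  rw [← div_eq_mul_inv, le_div_iff₀ (by positivity), mul_comm]
  exact hC m p

theorem KK_hasSum {i : Fin 3} (hi : i ≠ 0) {f : E3 → ℂ} (hf : Good f) (p : E3) :
    HasSum (fun m => KK i m f p) (f p) := by
  have hper : Function.Periodic (fun t : ℝ => f (p + t • Pi.single i 1)) 1 := by
    intro t
    simp only
    rw [add_smul, one_smul, ← add_assoc, hf.per hi]
  have hc : Continuous (fun t : ℝ => f (p + t • Pi.single i 1)) := by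
    have := hf.smooth.continuous
    fun_prop
  have hcl : Continuous hper.lift := by
    exact continuous_coinduced_dom.2 hc
  have : Fact (0 < (1 : ℝ)) := ⟨one_pos⟩
  let g : C(AddCircle (1 : ℝ), ℂ) := ⟨hper.lift, hcl⟩
  have hco : ∀ m, fourierCoeff g m = KK i m f p := by
    intro m
    rw [fourierCoeff_eq_intervalIntegral g m 0]
    unfold KK
    simp only [zero_add, div_one, one_smul]
    congr 1
    funext t
    have : g t = f (p + t • Pi.single i 1) := rfl
    rw [this, smul_eq_mul, fourier_coe_apply]
    congr 1
    unfold ch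
    congr 1
    push_cast
    ring
  have hs : Summable (fourierCoeff g) := by
    rw [show fourierCoeff g = fun m => KK i m f p from funext hco]
    exact KK_summable hi hf p
  have := has_pointwise_sum_fourier_series_of_summable hs 0
  have h0 : g 0 = f p := by
    have : g ((0 : ℝ) : AddCircle (1 : ℝ)) = f (p + (0 : ℝ) • Pi.single i 1) := rfl
    simpa using this
  rw [h0] at this
  simpa [hco] using this

theorem KK_shift {i : Fin 3} (hi : i ≠ 0) (m : ℤ) {f : E3 → ℂ} (hf : Good f) (p : E3) (s : ℝ) :
    KK i m f (p + s • Pi.single i 1) = ch m (-s) * KK i m f p := by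
  have hd : ∀ s : ℝ, HasDerivAt (fun s => ch m s * KK i m f (p + s • Pi.single i 1)) 0 s := by
    intro s
    have h1 := (hasDerivAt_ch m s).mul
      (hasDerivAt_line ((KK_good hi m hf).smooth.differentiable (by simp)) i p s)
    convert! h1 using 1
    rw [cpd_KK i m hf, KK_cpd hi m hf]
    ring
  have hcst := is_const_of_deriv_eq_zero (fun s => (hd s).differentiableAt)
    (fun s => (hd s).deriv) s 0
  simp only [zero_smul, add_zero, ch_zero, one_mul] at hcst
  rw [← hcst, ← mul_assoc]
  have : ch m (-s) * ch m s = 1 := by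
    unfold ch
    rw [← Complex.exp_add]
    push_cast
    ring_nf
    simp
  rw [this, one_mul]

noncomputable def DD (f : E3 → ℂ) (i : ℤ × ℤ) : E3 → ℂ := KK 1 i.1 (KK 2 i.2 f)

theorem KK_const_mul (i : Fin 3) (m : ℤ) (c : ℂ) (f : E3 → ℂ) (p : E3) :
    KK i m (fun q => c * f q) p = c * KK i m f p := by
  unfold KK
  rw [← intervalIntegral.integral_const_mul]
  congr 1
  funext t
  ring

theorem DD_good {f : E3 → ℂ} (hf : Good f) (i : ℤ × ℤ) : Good (DD f i) :=
  KK_good (by decide) _ (KK_good (by decide) _ hf)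

theorem cpd_DD {f : E3 → ℂ} (hf : Good f) (i : ℤ × ℤ) (j : Fin 3) :
    cpd j (DD f i) = DD (cpd j f) i := by
  unfold DD
  rw [cpd_KK _ _ (KK_good (by decide) _ hf), cpd_KK _ _ hf]

theorem DD_mul1 {f : E3 → ℂ} (hf : Good f) (i : ℤ × ℤ) (p : E3) :
    |(i.1 : ℝ)| * ‖DD f i p‖ ≤ ‖DD (cpd 1 f) i p‖ := by
  unfold DD
  rw [← cpd_KK _ _ hf]
  exact KK_mul_le (by decide) _ (KK_good (by decide) _ hf) p

theorem DD_mul2 {f : E3 → ℂ} (hf : Good f) (i : ℤ × ℤ) (p : E3) :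
    |(i.2 : ℝ)| * ‖DD f i p‖ ≤ ‖DD (cpd 2 f) i p‖ := by
  unfold DD
  have h : KK 2 i.2 (cpd 2 f) = fun q => 2 * Real.pi * Complex.I * i.2 * KK 2 i.2 f q := by
    funext q
    exact KK_cpd (by decide) _ hf q
  rw [h, KK_const_mul]
  simp only [norm_mul, Complex.norm_I, Complex.norm_real, Complex.norm_intCast, Complex.norm_ofNat,
    mul_one]
  rw [Real.norm_of_nonneg Real.pi_pos.le]
  have h1 : 1 ≤ 2 * Real.pi := by linarith [Real.pi_gt_three]
  have h2 : 0 ≤ |(i.2 : ℝ)| * ‖KK 1 i.1 (KK 2 i.2 f) p‖ := by positivity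
  nlinarith

theorem DD_decay (N : ℕ) : ∀ f : E3 → ℂ, Good f →
    ∃ C : ℝ, ∀ i p, wt i ^ N * ‖DD f i p‖ ≤ C := by
  induction N with
  | zero =>
    intro f hf
    obtain ⟨C, hC⟩ := hf.bounded
    exact ⟨C, fun i p => by simpa [DD] using KK_norm_le 1 i.1 (KK_norm_le 2 i.2 hC) p⟩
  | succ N ih =>
    intro f hf
    obtain ⟨C, hC⟩ := ih f hf
    obtain ⟨C', hC'⟩ := ih _ (hf.cpd 1)
    obtain ⟨C'', hC''⟩ := ih _ (hf.cpd 2)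
    refine ⟨C + C' + C'', fun i p => ?_⟩
    have h1 := hC i p
    have h2 := hC' i p
    have h2' := hC'' i p
    have h4 : 0 ≤ wt i ^ N := by have := one_le_wt i; positivity
    have h5 := mul_le_mul_of_nonneg_left (DD_mul1 hf i p) h4
    have h6 := mul_le_mul_of_nonneg_left (DD_mul2 hf i p) h4
    calc wt i ^ (N + 1) * ‖DD f i p‖ = wt i ^ N * ‖DD f i p‖ +
          wt i ^ N * (|(i.1 : ℝ)| * ‖DD f i p‖) + wt i ^ N * (|(i.2 : ℝ)| * ‖DD f i p‖) := by
            rw [pow_succ, wt]; ring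
      _ ≤ _ := by linarith

theorem DD_hasSum {f : E3 → ℂ} (hf : Good f) (p : E3) : HasSum (fun i => DD f i p) (f p) := by
  obtain ⟨C, hC⟩ := DD_decay 4 f hf
  have hs : Summable (fun i => DD f i p) := by
    refine Summable.of_norm_bounded (summable_wt.mul_left C) fun i => ?_
    have := one_le_wt i
    rw [← div_eq_mul_inv, le_div_iff₀ (by positivity), mul_comm]
    exact hC i p
  have hs' : Summable (fun i : ℤ × ℤ => DD f i.swap p) := hs.prod_symm
  have h1 : HasSum (fun i : ℤ × ℤ => DD f i.swap p) (f p) := by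
    have h2 := hs'.hasSum
    have h3 := h2.prod_fiberwise (fun n => KK_hasSum (i := 1) (by decide)
      (KK_good (i := 2) (by decide) n hf) p)
    have h4 := KK_hasSum (i := 2) (by decide) hf p
    rw [h4.unique h3]
    exact h2
  exact (Equiv.prodComm ℤ ℤ).hasSum_iff.1 h1

theorem DD_shape {f : E3 → ℂ} (hf : Good f) (i : ℤ × ℤ) (p : E3) :
    DD f i p = DD f i (0 + p 0 • Pi.single 0 1) * (ch i.1 (-(p 1)) * ch i.2 (-(p 2))) := by
  have hp : p = ((0 + p 0 • Pi.single 0 1) + p 2 • Pi.single 2 1) + p 1 • Pi.single 1 1 := by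
    funext j
    fin_cases j <;> simp
  have h2 : ∀ (q : E3) (s : ℝ), DD f i (q + s • Pi.single 2 1) = ch i.2 (-s) * DD f i q := by
    intro q s
    unfold DD
    rw [← KK_const_mul]
    unfold KK
    congr 1
    funext t
    congr 1
    have := KK_shift (i := 2) (by decide) i.2 hf (q + t • Pi.single 1 1) s
    unfold KK at this
    simp only
    rw [← this]
    congr 1
    funext t'
    congr 2
    abel
  conv_lhs => rw [hp]
  have h1 := KK_shift (i := 1) (by decide) i.1 (KK_good (i := 2) (by decide) i.2 hf)
    ((0 + p 0 • Pi.single 0 1) + p 2 • Pi.single 2 1) (p 1)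
  have h3 := h2 (0 + p 0 • Pi.single 0 1) (p 2)
  unfold DD at h3 ⊢
  rw [h1, h3]
  ring

noncomputable def cf (f : E3 → ℂ) (i : ℤ × ℤ) (x : ℝ) : ℂ := DD f i (0 + x • Pi.single 0 1)

theorem cf_hasDerivAt {f : E3 → ℂ} (hf : Good f) (i : ℤ × ℤ) (x : ℝ) :
    HasDerivAt (cf f i) (cf (cpd 0 f) i x) x := by
  have := hasDerivAt_line ((DD_good hf i).smooth.differentiable (by simp)) 0 0 x
  rwa [cpd_DD hf] at this

theorem cf_contDiff {f : E3 → ℂ} (hf : Good f) (i : ℤ × ℤ) : ContDiff ℝ (⊤ : ℕ∞) (cf f i) := by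
  have := (DD_good hf i).smooth
  unfold cf
  fun_prop

theorem cf_iteratedDeriv (k : ℕ) : ∀ {f : E3 → ℂ}, Good f → ∃ g, Good g ∧
    ∀ i, iteratedDeriv k (cf f i) = cf g i := by
  induction k with
  | zero => exact fun {f} hf => ⟨f, hf, fun i => by simp⟩
  | succ k ih =>
    intro f hf
    obtain ⟨g, hg, h⟩ := ih (hf.cpd 0)
    refine ⟨g, hg, fun i => ?_⟩
    rw [iteratedDeriv_succ', ← h]
    congr 1
    funext x
    exact (cf_hasDerivAt hf i x).deriv

theorem cf_RD {f : E3 → ℂ} (hf : Good f) : RD (cf f) where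
  smooth := cf_contDiff hf
  bound k N := by
    obtain ⟨g, hg, h⟩ := cf_iteratedDeriv k hf
    obtain ⟨C, hC⟩ := DD_decay N g hg
    exact ⟨C, fun i x => by rw [h]; exact hC i _⟩

theorem cf_supp {f : E3 → ℂ} (hf : Good f) (i : ℤ × ℤ) (x : ℝ) (hx : 2 < |x|) : cf f i x = 0 :=
  (DD_good hf i).supp _ (by simpa using hx)

noncomputable def ee (i : ℤ × ℤ) (p : E3) : ℂ := ch i.1 (-(p 1)) * ch i.2 (-(p 2))

theorem cf_hasSum {f : E3 → ℂ} (hf : Good f) (p : E3) :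
    HasSum (fun i => cf f i (p 0) * ee i p) (f p) := by
  refine (DD_hasSum hf p).congr_fun fun i => ?_
  exact (DD_shape hf i p).symm


theorem RD.deriv {a : ℤ × ℤ → ℝ → ℂ} (ha : RD a) : RD (fun i => deriv (a i)) where
  smooth i := ((contDiff_infty_iff_deriv).1 (ha.smooth i)).2
  bound k N := by
    obtain ⟨C, hC⟩ := ha.bound (k + 1) N
    refine ⟨C, fun i x => ?_⟩
    rw [← iteratedDeriv_succ']
    exact hC i x

theorem RD.add {a b : ℤ × ℤ → ℝ → ℂ} (ha : RD a) (hb : RD b) : RD (fun i x => a i x + b i x) where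
  smooth i := (ha.smooth i).add (hb.smooth i)
  bound k N := by
    obtain ⟨C, hC⟩ := ha.bound k N
    obtain ⟨C', hC'⟩ := hb.bound k N
    refine ⟨C + C', fun i x => ?_⟩
    rw [iteratedDeriv_fun_add (((ha.smooth i).of_le (by exact_mod_cast le_top)).contDiffAt)
      (((hb.smooth i).of_le (by exact_mod_cast le_top)).contDiffAt)]
    have h0 : 0 ≤ wt i ^ N := by have := one_le_wt i; positivity
    have := mul_le_mul_of_nonneg_left
      (norm_add_le (iteratedDeriv k (a i) x) (iteratedDeriv k (b i) x)) h0
    linarith [hC i x, hC' i x]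

theorem RD.smul {a : ℤ × ℤ → ℝ → ℂ} (ha : RD a) {c : ℤ × ℤ → ℂ} {C₀ : ℝ} {M : ℕ}
    (hc : ∀ i, ‖c i‖ ≤ C₀ * wt i ^ M) : RD (fun i x => c i * a i x) where
  smooth i := contDiff_const.mul (ha.smooth i)
  bound k N := by
    obtain ⟨C, hC⟩ := ha.bound k (M + N)
    refine ⟨C₀ * C, fun i x => ?_⟩
    have hC₀ : 0 ≤ C₀ := by
      have h1 := (norm_nonneg _).trans (hc (0, 0))
      have h2 : wt (0, 0) = 1 := by simp [wt]
      simpa [h2] using h1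
    rw [iteratedDeriv_const_mul_field, norm_mul]
    have h0 : 0 ≤ wt i := by linarith [one_le_wt i]
    calc wt i ^ N * (‖c i‖ * ‖iteratedDeriv k (a i) x‖)
        ≤ wt i ^ N * ((C₀ * wt i ^ M) * ‖iteratedDeriv k (a i) x‖) := by gcongr; exact hc i
      _ = C₀ * (wt i ^ (M + N) * ‖iteratedDeriv k (a i) x‖) := by rw [pow_add]; ring
      _ ≤ C₀ * C := by gcongr; exact hC i x

theorem hasFDerivAt_coord {h : ℝ → ℂ} {h' : ℂ} (j : Fin 3) (p : E3) (hh : HasDerivAt h h' (p j)) :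
    HasFDerivAt (fun p : E3 => h (p j)) (form (Pi.single j h')) p := by
  have h1 : HasFDerivAt (fun p : E3 => p j) (ContinuousLinearMap.proj (R := ℝ) j) p :=
    (ContinuousLinearMap.proj (R := ℝ) (φ := fun _ : Fin 3 => ℝ) j).hasFDerivAt
  have h2 := hh.hasFDerivAt.comp p h1
  convert! h2 using 1
  ext v
  rw [form_apply, Finset.sum_eq_single j]
  · simp
  · intro k _ hk
    simp [Pi.single_eq_of_ne hk]
  · simp

theorem hasFDerivAt_form_mul {f g : E3 → ℂ} {c d : Fin 3 → ℂ} {p : E3}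
    (hf : HasFDerivAt f (form c) p) (hg : HasFDerivAt g (form d) p) :
    HasFDerivAt (fun q => f q * g q) (form (fun j => c j * g p + f p * d j)) p := by
  have h := hf.mul hg
  convert! h using 1
  ext v
  simp [form_apply, Finset.mul_sum, Finset.sum_add_distrib]
  rw [add_comm]
  congr 1 <;> refine Finset.sum_congr rfl fun j _ => by ring

theorem hasFDerivAt_tsum_apply {ι E V : Type*} [NormedAddCommGroup E] [NormedSpace ℝ E]
    [NormedAddCommGroup V] [NormedSpace ℝ V] [CompleteSpace V] (g : ι → E → V)
    (g' : ι → E → E →L[ℝ] V) (u : ι → ℝ) (hu : Summable u)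
    (hd : ∀ i q, HasFDerivAt (g i) (g' i q) q) (hC : ∀ i q, ‖g' i q‖ ≤ u i) (p : E)
    (hs : Summable fun i => g i p) :
    ∃ L : E →L[ℝ] V, HasFDerivAt (fun q => ∑' i, g i q) L p ∧
      ∀ v, L v = ∑' i, g' i p v := by
  refine ⟨∑' i, g' i p, hasFDerivAt_tsum hu hd hC hs p, fun v => ?_⟩
  have hs : Summable (fun i => g' i p) := Summable.of_norm_bounded hu fun i => hC i p
  exact ((ContinuousLinearMap.apply ℝ V v).hasSum hs.hasSum).tsum_eq.symm

/-- action of partial derivatives on coefficient families -/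
noncomputable def dd (j : Fin 3) (a : ℤ × ℤ → ℝ → ℂ) : ℤ × ℤ → ℝ → ℂ :=
  ![fun i => deriv (a i), fun i x => (2 * Real.pi * Complex.I * i.1) * a i x,
    fun i x => (2 * Real.pi * Complex.I * i.2) * a i x] j

theorem norm_2piI (m : ℤ) : ‖(2 * Real.pi * Complex.I * m : ℂ)‖ = 2 * Real.pi * |(m : ℝ)| := by
  simp only [norm_mul, Complex.norm_I, Complex.norm_real, Complex.norm_intCast, Complex.norm_ofNat,
    mul_one]
  rw [Real.norm_of_nonneg Real.pi_pos.le]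

theorem RD.dd {a : ℤ × ℤ → ℝ → ℂ} (ha : RD a) (j : Fin 3) : RD (dd j a) := by
  have hpi := Real.pi_pos
  fin_cases j
  · exact ha.deriv
  · refine ha.smul (C₀ := 2 * Real.pi) (M := 1) fun i => ?_
    rw [norm_2piI]
    gcongr
    rw [wt]
    linarith [abs_nonneg (i.1 : ℝ), abs_nonneg (i.2 : ℝ)]
  · refine ha.smul (C₀ := 2 * Real.pi) (M := 1) fun i => ?_
    rw [norm_2piI]
    gcongr
    rw [wt]
    linarith [abs_nonneg (i.1 : ℝ), abs_nonneg (i.2 : ℝ)]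

theorem norm_ee (i : ℤ × ℤ) (p : E3) : ‖ee i p‖ = 1 := by
  simp [ee, norm_ch]

theorem term_hasFDerivAt {a : ℤ × ℤ → ℝ → ℂ} (ha : RD a) (i : ℤ × ℤ) (p : E3) :
    HasFDerivAt (fun q : E3 => a i (q 0) * ee i q) (form fun j => dd j a i (p 0) * ee i p) p := by
  have h0 : HasDerivAt (a i) (deriv (a i) (p 0)) (p 0) :=
    ((ha.smooth i).differentiable (by simp) _).hasDerivAt
  have hc : ∀ (m : ℤ) (t : ℝ), HasDerivAt (fun t => ch m (-t))
      (2 * Real.pi * Complex.I * m * ch m (-t)) t := by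
    intro m t
    have := (hasDerivAt_ch m (-t)).scomp t (hasDerivAt_neg t)
    convert! this using 1
    simp
  have h := hasFDerivAt_form_mul (hasFDerivAt_coord 0 p h0)
    (hasFDerivAt_form_mul (hasFDerivAt_coord 1 p (hc i.1 (p 1))) (hasFDerivAt_coord 2 p (hc i.2 (p 2))))
  convert! h using 1
  congr 1
  funext j
  fin_cases j <;> simp [dd, ee] <;> ring

noncomputable def SS (a : ℤ × ℤ → ℝ → ℂ) (p : E3) : ℂ := ∑' i, a i (p 0) * ee i p

theorem RD.bdd {a : ℤ × ℤ → ℝ → ℂ} (ha : RD a) : ∃ C : ℝ, ∀ i x, ‖a i x‖ ≤ C * (wt i ^ 4)⁻¹ := by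
  obtain ⟨C, hC⟩ := ha.bound 0 4
  refine ⟨C, fun i x => ?_⟩
  have := one_le_wt i
  rw [← div_eq_mul_inv, le_div_iff₀ (by positivity), mul_comm]
  simpa using hC i x

theorem RD.summable {a : ℤ × ℤ → ℝ → ℂ} (ha : RD a) (p : E3) :
    Summable fun i => a i (p 0) * ee i p := by
  obtain ⟨C, hC⟩ := ha.bdd
  refine Summable.of_norm_bounded (summable_wt.mul_left C) fun i => ?_
  rw [norm_mul, norm_ee, mul_one]
  exact hC i _

theorem SS_hasFDerivAt {a : ℤ × ℤ → ℝ → ℂ} (ha : RD a) (p : E3) :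
    HasFDerivAt (SS a) (form fun j => SS (dd j a) p) p := by
  choose C hC using fun j => (ha.dd j).bdd
  have hb : ∀ (i : ℤ × ℤ) (q : E3), ‖form fun j => dd j a i (q 0) * ee i q‖ ≤
      (∑ j, C j) * (wt i ^ 4)⁻¹ := by
    intro i q
    refine (norm_form_le _).trans ?_
    rw [Finset.sum_mul]
    refine Finset.sum_le_sum fun j _ => ?_
    rw [norm_mul, norm_ee, mul_one]
    exact hC j i _
  obtain ⟨L, hL, hLv⟩ := hasFDerivAt_tsum_apply _ _ _ (summable_wt.mul_left _)
    (term_hasFDerivAt ha) hb p (ha.summable p)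
  have hL2 : L = form (fun j => SS (dd j a) p) := by
    rw [clm_eq_form L]
    congr 1
    funext j
    rw [hLv]
    simp only [form_single]
    rfl
  rw [← hL2]
  exact hL

theorem SS_contDiff {a : ℤ × ℤ → ℝ → ℂ} (ha : RD a) : ContDiff ℝ (⊤ : ℕ∞) (SS a) := by
  refine contDiff_of_pd_closed (fun h => ∃ a, RD a ∧ h = SS a) ?_ ⟨a, ha, rfl⟩
  rintro _ ⟨a, ha, rfl⟩
  exact ⟨fun j => SS (dd j a), fun j => ⟨_, ha.dd j, rfl⟩, SS_hasFDerivAt ha⟩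

theorem cpd_SS {a : ℤ × ℤ → ℝ → ℂ} (ha : RD a) (j : Fin 3) : cpd j (SS a) = SS (dd j a) := by
  funext p
  unfold cpd
  rw [(SS_hasFDerivAt ha p).fderiv, form_single]

theorem ch_add_int (m n : ℤ) (t : ℝ) : ch m (t + n) = ch m t := by
  unfold ch
  rw [Complex.exp_eq_exp_iff_exists_int]
  exact ⟨-(m * n), by push_cast; ring⟩

theorem SS_per1 (a : ℤ × ℤ → ℝ → ℂ) (p : E3) : SS a (p + Pi.single 1 1) = SS a p := by
  unfold SS
  congr 1
  funext i
  have := ch_add_int i.1 (-1) (-(p 1))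
  simp [ee, neg_add_rev] at this ⊢
  rw [add_comm, this]
  simp

theorem SS_per2 (a : ℤ × ℤ → ℝ → ℂ) (p : E3) : SS a (p + Pi.single 2 1) = SS a p := by
  unfold SS
  congr 1
  funext i
  have := ch_add_int i.2 (-1) (-(p 2))
  simp [ee, neg_add_rev] at this ⊢
  rw [add_comm, this]
  simp


noncomputable def AA (μ : ℝ) (a : ℝ → ℂ) (x : ℝ) : ℂ :=
  (Real.exp (-(μ * x)) : ℂ) * ∫ s in (-3 : ℝ)..x, (Real.exp (μ * s) : ℂ) * a s

theorem AA_hasDerivAt (μ : ℝ) {a : ℝ → ℂ} (ha : Continuous a) (x : ℝ) :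
    HasDerivAt (AA μ a) (a x - μ * AA μ a x) x := by
  have hc : Continuous (fun s : ℝ => (Real.exp (μ * s) : ℂ) * a s) := by fun_prop
  have h1 : HasDerivAt (fun x => ∫ s in (-3 : ℝ)..x, (Real.exp (μ * s) : ℂ) * a s)
      ((Real.exp (μ * x) : ℂ) * a x) x :=
    intervalIntegral.integral_hasDerivAt_right (hc.intervalIntegrable _ _)
      hc.aestronglyMeasurable.stronglyMeasurableAtFilter hc.continuousAt
  have h2 : HasDerivAt (fun x : ℝ => Real.exp (-(μ * x))) (Real.exp (-(μ * x)) * (-(μ * 1))) x :=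
    (((hasDerivAt_id x).const_mul μ).neg).exp
  have h3 := h2.ofReal_comp.mul h1
  convert! h3 using 1
  have h4 : (Real.exp (-(μ * x)) : ℂ) * (Real.exp (μ * x) : ℂ) = 1 := by
    rw [← Complex.ofReal_mul, ← Real.exp_add]; simp
  unfold AA
  push_cast at h4 ⊢
  linear_combination (-a x) * h4

theorem AA_contDiff (μ : ℝ) {a : ℝ → ℂ} (ha : ContDiff ℝ (⊤ : ℕ∞) a) :
    ContDiff ℝ (⊤ : ℕ∞) (AA μ a) := by
  have hd := AA_hasDerivAt μ ha.continuous
  have hdiff : Differentiable ℝ (AA μ a) := fun x => (hd x).differentiableAt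
  have hderiv : deriv (AA μ a) = fun x => a x - μ * AA μ a x := funext fun x => (hd x).deriv
  rw [contDiff_infty]
  intro n
  induction n with
  | zero => exact contDiff_zero.2 hdiff.continuous
  | succ n ih =>
    have := contDiff_succ_iff_deriv (𝕜 := ℝ) (f := AA μ a) (n := (n : ℕ∞))
    push_cast at this ⊢
    rw [this]
    refine ⟨hdiff, by simp, ?_⟩
    rw [hderiv]
    exact (ha.of_le (by exact_mod_cast le_top)).sub (contDiff_const.mul ih)

theorem AA_bound {μ : ℝ} (hμ : 0 < μ) {a : ℝ → ℂ} (ha : Continuous a) {S : ℝ}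
    (hS : ∀ x, ‖a x‖ ≤ S) (hsupp : ∀ x, 2 < |x| → a x = 0) (x : ℝ) : ‖AA μ a x‖ ≤ S / μ := by
  have hS0 : 0 ≤ S := (norm_nonneg _).trans (hS 0)
  rcases le_or_gt (-3) x with hx | hx
  · have hI : ∫ s in (-3 : ℝ)..x, Real.exp (μ * s) * S
        = S / μ * Real.exp (μ * x) - S / μ * Real.exp (μ * (-3)) := by
      refine intervalIntegral.integral_eq_sub_of_hasDerivAt
        (f := fun s => S / μ * Real.exp (μ * s)) ?_ ?_
      · intro s _
        have := (((hasDerivAt_id s).const_mul μ).exp).const_mul (S / μ)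
        convert! this using 1
        simp only [id]
        field_simp
      · exact Continuous.intervalIntegrable (by fun_prop) _ _
    have h1 : ‖∫ s in (-3 : ℝ)..x, (Real.exp (μ * s) : ℂ) * a s‖
        ≤ ∫ s in (-3 : ℝ)..x, Real.exp (μ * s) * S := by
      refine intervalIntegral.norm_integral_le_of_norm_le hx ?_ ?_
      · refine Eventually.of_forall fun s _ => ?_
        rw [norm_mul, Complex.norm_real, Real.norm_of_nonneg (Real.exp_nonneg _)]
        gcongr
        exact hS s
      · exact Continuous.intervalIntegrable (by fun_prop) _ _
    unfold AA
    rw [norm_mul, Complex.norm_real, Real.norm_of_nonneg (Real.exp_nonneg _)]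
    calc _ ≤ Real.exp (-(μ * x)) * (S / μ * Real.exp (μ * x)) := by
          gcongr
          rw [hI] at h1
          have : 0 ≤ S / μ * Real.exp (μ * (-3)) := by positivity
          linarith
      _ = S / μ * (Real.exp (-(μ * x)) * Real.exp (μ * x)) := by ring
      _ = S / μ := by rw [← Real.exp_add]; simp
  · have : ∫ s in (-3 : ℝ)..x, (Real.exp (μ * s) : ℂ) * a s = ∫ s in (-3 : ℝ)..x, (0 : ℂ) := by
      refine intervalIntegral.integral_congr fun s hs => ?_
      rw [Set.uIcc_of_ge hx.le] at hs
      have : 2 < |s| := by rw [lt_abs]; right; linarith [hs.2]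
      simp [hsupp s this]
    unfold AA
    rw [this]
    simp only [intervalIntegral.integral_zero, mul_zero, norm_zero]
    positivity

theorem AA_RD {lam C₀ : ℝ} (hlam : 0 < lam) {μ : ℤ × ℤ → ℝ} (h1 : ∀ i, lam ≤ μ i)
    (h2 : ∀ i, μ i ≤ C₀ * wt i) {a : ℤ × ℤ → ℝ → ℂ} (ha : RD a)
    (hsupp : ∀ i x, 2 < |x| → a i x = 0) : RD (fun i => AA (μ i) (a i)) where
  smooth i := AA_contDiff _ (ha.smooth i)
  bound k := by
    have hC₀ : 0 ≤ C₀ := by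
      have := h2 (0, 0)
      have h3 : wt (0, 0) = 1 := by simp [wt]
      rw [h3] at this
      linarith [h1 (0, 0)]
    induction k with
    | zero =>
      intro N
      obtain ⟨C, hC⟩ := ha.bound 0 N
      refine ⟨C / lam, fun i x => ?_⟩
      have hw : 0 < wt i ^ N := by have := one_le_wt i; positivity
      have hμ := h1 i
      have hb := AA_bound (μ := μ i) (by linarith) (ha.smooth i).continuous (S := C / wt i ^ N)
        (fun x => by
          rw [le_div_iff₀ hw, mul_comm]
          simpa using hC i x) (hsupp i) x
      have hC0 : 0 ≤ C := le_trans (by positivity) (hC i x)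
      rw [iteratedDeriv_zero]
      calc _ ≤ wt i ^ N * (C / wt i ^ N / μ i) := by gcongr
        _ = C / μ i := by field_simp
        _ ≤ C / lam := by gcongr
    | succ k ih =>
      intro N
      obtain ⟨C, hC⟩ := ha.bound k N
      obtain ⟨D, hD⟩ := ih (N + 1)
      refine ⟨C + C₀ * D, fun i x => ?_⟩
      have hderiv : deriv (AA (μ i) (a i)) = fun x => a i x - μ i * AA (μ i) (a i) x :=
        funext fun x => (AA_hasDerivAt _ (ha.smooth i).continuous x).deriv
      have hs1 : ContDiff ℝ k (a i) := (ha.smooth i).of_le (by exact_mod_cast le_top)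
      have hs2 : ContDiff ℝ k (AA (μ i) (a i)) :=
        (AA_contDiff _ (ha.smooth i)).of_le (by exact_mod_cast le_top)
      rw [iteratedDeriv_succ', hderiv, iteratedDeriv_fun_sub hs1.contDiffAt
        (contDiff_const.mul hs2).contDiffAt, iteratedDeriv_const_mul_field]
      have hw : 0 ≤ wt i := by linarith [one_le_wt i]
      have hμ : 0 ≤ μ i := by linarith [h1 i]
      calc _ ≤ wt i ^ N * (‖iteratedDeriv k (a i) x‖
            + ‖(μ i : ℂ) * iteratedDeriv k (AA (μ i) (a i)) x‖) := by
            gcongr; exact norm_sub_le _ _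
        _ = wt i ^ N * ‖iteratedDeriv k (a i) x‖
            + wt i ^ N * (μ i * ‖iteratedDeriv k (AA (μ i) (a i)) x‖) := by
            rw [norm_mul, Complex.norm_real, Real.norm_of_nonneg hμ]; ring
        _ ≤ C + wt i ^ N * ((C₀ * wt i) * ‖iteratedDeriv k (AA (μ i) (a i)) x‖) := by
            gcongr
            · exact hC i x
            · exact h2 i
        _ = C + C₀ * (wt i ^ (N + 1) * ‖iteratedDeriv k (AA (μ i) (a i)) x‖) := by ring
        _ ≤ C + C₀ * D := by gcongr; exact hD i x

theorem RD.refl' {a : ℤ × ℤ → ℝ → ℂ} (ha : RD a) (c : ℝ) : RD (fun i x => a i (c - x)) where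
  smooth i := (ha.smooth i).comp (contDiff_const.sub contDiff_id)
  bound k N := by
    obtain ⟨C, hC⟩ := ha.bound k N
    refine ⟨C, fun i x => ?_⟩
    rw [iteratedDeriv_comp_const_sub]
    simp only [norm_smul, norm_pow, norm_neg, norm_one, one_pow, one_mul]
    exact hC i (c - x)

noncomputable def phic (t : ℝ) : ℂ := ((Real.exp (-t) * Real.smoothTransition (t + 2) : ℝ) : ℂ)

theorem phic_contDiff : ContDiff ℝ (⊤ : ℕ∞) phic := by
  have h : ContDiff ℝ (⊤ : ℕ∞) (fun t : ℝ => Real.exp (-t) * Real.smoothTransition (t + 2)) :=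
    (contDiff_id.neg.exp).mul
      ((Real.smoothTransition.contDiff).comp (contDiff_id.add contDiff_const))
  exact Complex.ofRealCLM.contDiff.comp h

theorem phic_eq {t : ℝ} (ht : -1 ≤ t) : phic t = (Real.exp (-t) : ℂ) := by
  unfold phic
  rw [Real.smoothTransition.one_of_one_le (by linarith), mul_one]

theorem phic_hasDerivAt {t : ℝ} (ht : -1 < t) : HasDerivAt phic (-phic t) t := by
  have h2 : HasDerivAt (fun x : ℝ => Real.exp (-x)) (Real.exp (-t) * (-1)) t :=
    ((hasDerivAt_id t).neg).exp
  have h3 := h2.ofReal_comp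
  have he : phic =ᶠ[𝓝 t] fun x : ℝ => (Real.exp (-x) : ℂ) := by
    filter_upwards [lt_mem_nhds ht] with s hs
    exact phic_eq hs.le
  convert! h3.congr_of_eventuallyEq he using 1
  rw [phic_eq ht.le]
  push_cast
  ring

theorem phic_iter (k : ℕ) : ∀ t : ℝ, -1 < t → iteratedDeriv k phic t = (-1) ^ k * phic t := by
  induction k with
  | zero => intro t _; simp
  | succ k ih =>
    intro t ht
    rw [iteratedDeriv_succ]
    have he : iteratedDeriv k phic =ᶠ[𝓝 t] fun x : ℝ => (-1) ^ k * phic x := by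
      filter_upwards [lt_mem_nhds ht] with s hs
      exact ih s hs
    rw [he.deriv_eq, ((phic_hasDerivAt ht).const_mul _).deriv]
    ring

theorem phic_iter0 (k : ℕ) : ∀ t : ℝ, t < -2 → iteratedDeriv k phic t = 0 := by
  induction k with
  | zero =>
    intro t ht
    simp [phic, Real.smoothTransition.zero_of_nonpos (show t + 2 ≤ 0 by linarith)]
  | succ k ih =>
    intro t ht
    rw [iteratedDeriv_succ]
    have he : iteratedDeriv k phic =ᶠ[𝓝 t] fun _ : ℝ => 0 := by
      filter_upwards [gt_mem_nhds ht] with s hs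
      exact ih s hs
    rw [he.deriv_eq]
    simp

theorem phic_bdd (k : ℕ) : ∃ C : ℝ, 0 ≤ C ∧ ∀ t, ‖iteratedDeriv k phic t‖ ≤ C := by
  have hc : Continuous (iteratedDeriv k phic) :=
    phic_contDiff.continuous_iteratedDeriv k (by exact_mod_cast le_top)
  obtain ⟨C, hC⟩ := (isCompact_Icc (a := (-2 : ℝ)) (b := -1)).exists_bound_of_continuousOn
    hc.continuousOn
  refine ⟨max C (Real.exp 1), le_max_of_le_right (Real.exp_nonneg _), fun t => ?_⟩
  rcases lt_or_ge t (-2) with h | h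
  · rw [phic_iter0 k t h, norm_zero]
    exact le_max_of_le_right (Real.exp_nonneg _)
  rcases le_or_gt t (-1) with h' | h'
  · exact le_max_of_le_left (hC t ⟨h, h'⟩)
  · refine le_max_of_le_right ?_
    rw [phic_iter k t h', phic_eq h'.le, norm_mul, norm_pow, norm_neg, norm_one, one_pow, one_mul,
      Complex.norm_real, Real.norm_of_nonneg (Real.exp_nonneg _)]
    exact Real.exp_le_exp.2 (by linarith)

theorem phic_RD {C₀ : ℝ} {μ : ℤ × ℤ → ℝ} (h1 : ∀ i, 0 ≤ μ i)
    (h2 : ∀ i, μ i ≤ C₀ * wt i) {c : ℤ × ℤ → ℂ} (hc : ∀ N : ℕ, ∃ C, ∀ i, wt i ^ N * ‖c i‖ ≤ C) :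
    RD (fun i x => c i * phic (μ i * x)) where
  smooth i := contDiff_const.mul (phic_contDiff.comp (contDiff_const.mul contDiff_id))
  bound k N := by
    have hC₀ : 0 ≤ C₀ := by
      have := h2 (0, 0)
      have h3 : wt (0, 0) = 1 := by simp [wt]
      rw [h3] at this
      linarith [h1 (0, 0)]
    obtain ⟨C, hC⟩ := hc (k + N)
    obtain ⟨D, hD0, hD⟩ := phic_bdd k
    refine ⟨C₀ ^ k * C * D, fun i x => ?_⟩
    have hs : ContDiff ℝ k phic := phic_contDiff.of_le (by exact_mod_cast le_top)
    have hh := iteratedDeriv_comp_const_smul hs (μ i)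
    have hw : 0 ≤ wt i := by linarith [one_le_wt i]
    rw [iteratedDeriv_const_mul_field, hh]
    simp only [norm_mul, norm_smul, norm_pow, Real.norm_of_nonneg (h1 i)]
    have hC0 : 0 ≤ C := le_trans (by positivity) (hC i)
    have := h1 i
    calc _ ≤ wt i ^ N * (‖c i‖ * ((C₀ * wt i) ^ k * D)) := by
            gcongr
            · exact h2 i
            · exact hD _
      _ = C₀ ^ k * (wt i ^ (k + N) * ‖c i‖) * D := by rw [mul_pow, pow_add]; ring
      _ ≤ C₀ ^ k * C * D := by gcongr; exact hC i


def RDc (c : ℤ × ℤ → ℂ) : Prop := ∀ N : ℕ, ∃ C, ∀ i, wt i ^ N * ‖c i‖ ≤ C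

theorem RD.eval {a : ℤ × ℤ → ℝ → ℂ} (ha : RD a) (x : ℝ) : RDc (fun i => a i x) := fun N => by
  obtain ⟨C, hC⟩ := ha.bound 0 N
  exact ⟨C, fun i => by simpa using hC i x⟩

theorem RDc.add {a b : ℤ × ℤ → ℂ} (ha : RDc a) (hb : RDc b) : RDc (fun i => a i + b i) :=
  fun N => by
  obtain ⟨C, hC⟩ := ha N
  obtain ⟨C', hC'⟩ := hb N
  refine ⟨C + C', fun i => ?_⟩
  have h0 : 0 ≤ wt i ^ N := by have := one_le_wt i; positivity
  have := mul_le_mul_of_nonneg_left (norm_add_le (a i) (b i)) h0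
  linarith [hC i, hC' i]

theorem RDc.mul {a d : ℤ × ℤ → ℂ} (ha : RDc a) {D : ℝ} (hd : ∀ i, ‖d i‖ ≤ D) :
    RDc (fun i => d i * a i) := fun N => by
  obtain ⟨C, hC⟩ := ha N
  refine ⟨D * C, fun i => ?_⟩
  have h0 : 0 ≤ wt i ^ N := by have := one_le_wt i; positivity
  have hD : 0 ≤ D := (norm_nonneg _).trans (hd i)
  calc _ = ‖d i‖ * (wt i ^ N * ‖a i‖) := by rw [norm_mul]; ring
    _ ≤ D * C := mul_le_mul (hd i) (hC i) (by positivity) hD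

theorem exists_u {lam C₀ : ℝ} (hlam : 0 < lam) {μ : ℤ × ℤ → ℝ} (h1 : ∀ i, lam ≤ μ i)
    (h2 : ∀ i, μ i ≤ C₀ * wt i) {a : ℤ × ℤ → ℝ → ℂ} (ha : RD a)
    (hsupp : ∀ i x, 2 < |x| → a i x = 0) :
    ∃ u : ℤ × ℤ → ℝ → ℂ, RD u ∧ (∀ i, deriv (u i) 0 = 0 ∧ deriv (u i) 1 = 0) ∧
      ∀ i, ∀ x ∈ Set.Icc (0 : ℝ) 1, deriv (deriv (u i)) x = (μ i : ℂ) ^ 2 * u i x - a i x := by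
  have hμ0 : ∀ i, 0 < μ i := fun i => lt_of_lt_of_le hlam (h1 i)
  have hARD := AA_RD hlam h1 h2 ha hsupp
  have hBRD' := AA_RD hlam h1 h2 (ha.refl' 0) (fun i x hx => hsupp i _ (by simpa using hx))
  have hBRD := hBRD'.refl' 0
  set A : ℤ × ℤ → ℝ → ℂ := fun i => AA (μ i) (a i) with hA
  set B : ℤ × ℤ → ℝ → ℂ := fun i x => AA (μ i) (fun s => a i (0 - s)) (0 - x) with hB
  have hAd : ∀ i x, HasDerivAt (A i) (a i x - μ i * A i x) x := fun i x =>
    AA_hasDerivAt _ (ha.smooth i).continuous x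
  have hBd : ∀ i x, HasDerivAt (B i) (μ i * B i x - a i x) x := fun i x => by
    have hh := AA_hasDerivAt (μ i) ((ha.refl' 0).smooth i).continuous (0 - x)
    have := hh.scomp x ((hasDerivAt_id x).const_sub 0)
    convert! this using 1
    simp [hB]
  have hneg : ∀ i : ℤ × ℤ, ‖(fun _ : ℤ × ℤ => (-1 : ℂ)) i‖ ≤ 1 * wt i ^ 0 := by simp
  have hDRD := hBRD.add (hARD.smul hneg)
  have hSRD := hBRD.add hARD
  -- constants
  set q : ℤ × ℤ → ℝ := fun i => Real.exp (-μ i) with hq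
  have hq1 : ∀ i, q i ≤ Real.exp (-lam) := fun i => Real.exp_le_exp.2 (by linarith [h1 i])
  have hq2 : Real.exp (-lam) < 1 := by rw [Real.exp_lt_one_iff]; linarith
  have hq0 : ∀ i, 0 < q i := fun i => Real.exp_pos _
  set r : ℤ × ℤ → ℝ := fun i => 1 / (2 * μ i * (1 - q i ^ 2)) with hr
  have hqq : ∀ i, 1 - Real.exp (-lam) ≤ 1 - q i ^ 2 := fun i => by
    nlinarith [hq1 i, hq0 i]
  have hr1 : ∀ i, ‖(r i : ℂ)‖ ≤ 1 / (2 * lam * (1 - Real.exp (-lam))) := fun i => by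
    have h3 : 0 < 1 - Real.exp (-lam) := by linarith
    have h4 := hqq i
    have h5 := h1 i
    have h6 := hμ0 i
    rw [Complex.norm_real, Real.norm_of_nonneg]
    · simp only [hr]
      gcongr
    · simp only [hr]
      have : 0 < 1 - q i ^ 2 := by linarith
      positivity
  have hrq : ∀ i, ‖((-(r i * q i) : ℝ) : ℂ)‖ ≤ 1 / (2 * lam * (1 - Real.exp (-lam))) := fun i => by
    have := hr1 i
    rw [Complex.ofReal_neg, norm_neg, Complex.ofReal_mul, norm_mul]
    have h5 : ‖(q i : ℂ)‖ ≤ 1 := by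
      rw [Complex.norm_real, Real.norm_of_nonneg (hq0 i).le]; linarith [hq1 i]
    nlinarith [norm_nonneg (r i : ℂ), norm_nonneg (q i : ℂ)]
  have hnr : ∀ i, ‖((-r i : ℝ) : ℂ)‖ ≤ 1 / (2 * lam * (1 - Real.exp (-lam))) := fun i => by
    rw [Complex.ofReal_neg, norm_neg]; exact hr1 i
  have hnrq : ∀ i, ‖((r i * q i : ℝ) : ℂ)‖ ≤ 1 / (2 * lam * (1 - Real.exp (-lam))) := fun i => by
    have := hrq i
    rwa [Complex.ofReal_neg, norm_neg] at this
  have hal := ((hDRD.eval 0).mul hr1).add ((hDRD.eval 1).mul hrq)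
  have hbe := ((hDRD.eval 0).mul hnrq).add ((hDRD.eval 1).mul hnr)
  set α : ℤ × ℤ → ℂ := fun i => (r i : ℂ) * (B i 0 + -1 * A i 0) +
    ((-(r i * q i) : ℝ) : ℂ) * (B i 1 + -1 * A i 1) with hα
  set β : ℤ × ℤ → ℂ := fun i => ((r i * q i : ℝ) : ℂ) * (B i 0 + -1 * A i 0) +
    ((-r i : ℝ) : ℂ) * (B i 1 + -1 * A i 1) with hβ
  have hP := phic_RD (fun i => (hμ0 i).le) h2 hal
  have hQ := (phic_RD (fun i => (hμ0 i).le) h2 hbe).refl' 1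
  have hinv : ∀ i, ‖(fun i => ((1 / (2 * μ i) : ℝ) : ℂ)) i‖ ≤ (1 / (2 * lam)) * wt i ^ 0 :=
    fun i => by
    have h5 := h1 i
    have h6 := hμ0 i
    simp only
    rw [Complex.norm_real, Real.norm_of_nonneg (by positivity), pow_zero, mul_one]
    gcongr
  have hU := ((hSRD.smul hinv).add hP).add hQ
  refine ⟨_, hU, ?_⟩
  have hμc : ∀ i, (μ i : ℂ) ≠ 0 := fun i => by exact_mod_cast (hμ0 i).ne'
  have hder : ∀ i x, -1 < μ i * x → -1 < μ i * (1 - x) → HasDerivAt (fun x =>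
      ((1 / (2 * μ i) : ℝ) : ℂ) * (B i x + A i x) + α i * phic (μ i * x)
        + β i * phic (μ i * (1 - x)))
      ((B i x - A i x) / 2 - μ i * α i * phic (μ i * x) + μ i * β i * phic (μ i * (1 - x))) x := by
    intro i x hx hx'
    have e1 := ((hBd i x).add (hAd i x)).const_mul ((1 / (2 * μ i) : ℝ) : ℂ)
    have e2 := ((phic_hasDerivAt hx).scomp x ((hasDerivAt_id x).const_mul (μ i))).const_mul (α i)
    have e3 := ((phic_hasDerivAt hx').scomp x
      (((hasDerivAt_id x).const_sub 1).const_mul (μ i))).const_mul (β i)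
    convert! (e1.add e2).add e3 using 1
    have := hμc i
    simp only [Complex.real_smul]
    push_cast
    field_simp
    ring
  have hder2 : ∀ i x, -1 < μ i * x → -1 < μ i * (1 - x) → HasDerivAt (fun x =>
      ((B i x - A i x) / 2 - μ i * α i * phic (μ i * x) + μ i * β i * phic (μ i * (1 - x))))
      ((μ i : ℂ) ^ 2 * (((1 / (2 * μ i) : ℝ) : ℂ) * (B i x + A i x) + α i * phic (μ i * x)
        + β i * phic (μ i * (1 - x))) - a i x) x := by
    intro i x hx hx'
    have e1 := ((hBd i x).sub (hAd i x)).div_const 2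
    have e2 := ((phic_hasDerivAt hx).scomp x
      ((hasDerivAt_id x).const_mul (μ i))).const_mul (μ i * α i : ℂ)
    have e3 := ((phic_hasDerivAt hx').scomp x
      (((hasDerivAt_id x).const_sub 1).const_mul (μ i))).const_mul (μ i * β i : ℂ)
    convert! (e1.sub e2).add e3 using 1
    have := hμc i
    simp only [Complex.real_smul]
    push_cast
    field_simp
    ring
  have hin : ∀ i, ∀ x ∈ Set.Icc (0 : ℝ) 1, -1 < μ i * x ∧ -1 < μ i * (1 - x) := by
    intro i x hx
    have e1 := mul_nonneg (hμ0 i).le hx.1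
    have e2 := mul_nonneg (hμ0 i).le (sub_nonneg.2 hx.2)
    constructor <;> linarith
  have p0 : phic 0 = 1 := by rw [phic_eq (by norm_num)]; simp
  have pq : ∀ i, phic (μ i) = q i := fun i => by rw [phic_eq (by linarith [hμ0 i])]
  have hne : ∀ i, (1 - (q i : ℂ) ^ 2) ≠ 0 := fun i => by
    have h3 : 1 - q i ^ 2 ≠ 0 := by have := hqq i; intro h; linarith
    exact_mod_cast h3
  refine ⟨fun i => ⟨?_, ?_⟩, fun i x hx => ?_⟩
  · obtain ⟨e1, e2⟩ := hin i 0 (by simp)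
    rw [(hder i 0 e1 e2).deriv]
    have := hμc i
    have := hne i
    simp only [mul_zero, sub_zero, mul_one, p0, pq, hα, hβ, hr]
    push_cast
    field_simp
    ring
  · obtain ⟨e1, e2⟩ := hin i 1 (by simp)
    rw [(hder i 1 e1 e2).deriv]
    have := hμc i
    have := hne i
    simp only [mul_zero, sub_self, mul_one, p0, pq, hα, hβ, hr]
    push_cast
    field_simp
    ring
  · obtain ⟨e1, e2⟩ := hin i x hx
    have ho : ∀ᶠ y in 𝓝 x, -1 < μ i * y ∧ -1 < μ i * (1 - y) := by
      have c1 : Continuous fun y => μ i * y := by fun_prop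
      have c2 : Continuous fun y => μ i * (1 - y) := by fun_prop
      exact (c1.continuousAt.eventually (lt_mem_nhds e1)).and
        (c2.continuousAt.eventually (lt_mem_nhds e2))
    have he := ho.mono fun y hy => (hder i y hy.1 hy.2).deriv
    rw [EventuallyEq.deriv_eq he, (hder2 i x e1 e2).deriv]


noncomputable def mu (lam : ℝ) (i : ℤ × ℤ) : ℝ :=
  √(lam ^ 2 + 4 * Real.pi ^ 2 * ((i.1 : ℝ) ^ 2 + (i.2 : ℝ) ^ 2))

theorem mu_sq (lam : ℝ) (i : ℤ × ℤ) :
    mu lam i ^ 2 = lam ^ 2 + 4 * Real.pi ^ 2 * ((i.1 : ℝ) ^ 2 + (i.2 : ℝ) ^ 2) :=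
  Real.sq_sqrt (by positivity)

theorem le_mu (lam : ℝ) (i : ℤ × ℤ) : lam ≤ mu lam i := by
  refine Real.le_sqrt_of_sq_le ?_
  have : 0 ≤ 4 * Real.pi ^ 2 * ((i.1 : ℝ) ^ 2 + (i.2 : ℝ) ^ 2) := by positivity
  linarith

theorem mu_le {lam : ℝ} (hlam : 0 < lam) (i : ℤ × ℤ) : mu lam i ≤ (lam + 2 * Real.pi) * wt i := by
  have hw := one_le_wt i
  have hpi := Real.pi_pos
  refine Real.sqrt_le_iff.2 ⟨by positivity, ?_⟩
  have h1 : (i.1 : ℝ) ^ 2 + (i.2 : ℝ) ^ 2 ≤ wt i ^ 2 := by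
    unfold wt
    rw [← sq_abs (i.1 : ℝ), ← sq_abs (i.2 : ℝ)]
    nlinarith [abs_nonneg (i.1 : ℝ), abs_nonneg (i.2 : ℝ),
      mul_nonneg (abs_nonneg (i.1 : ℝ)) (abs_nonneg (i.2 : ℝ))]
  have h2 : lam ^ 2 ≤ lam ^ 2 * wt i ^ 2 := by
    have : 1 ≤ wt i ^ 2 := one_le_pow₀ hw
    nlinarith [sq_nonneg lam]
  have h3 : 4 * Real.pi ^ 2 * ((i.1 : ℝ) ^ 2 + (i.2 : ℝ) ^ 2) ≤ 4 * Real.pi ^ 2 * wt i ^ 2 := by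
    gcongr
  have h4 : 0 ≤ lam * Real.pi * wt i ^ 2 := by positivity
  nlinarith

theorem exists_U {lam : ℝ} (hlam : 0 < lam) {f : E3 → ℂ} (hf : Good f) :
    ∃ U : E3 → ℂ, ContDiff ℝ (⊤ : ℕ∞) U ∧ (∀ p, U (p + Pi.single 1 1) = U p) ∧
      (∀ p, U (p + Pi.single 2 1) = U p) ∧
      (∀ p, p 0 = 0 ∨ p 0 = 1 → cpd 0 U p = 0) ∧
      ∀ p, p 0 ∈ Set.Icc (0 : ℝ) 1 →
        (lam : ℂ) ^ 2 * U p - ∑ j, cpd j (cpd j U) p = f p := by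
  obtain ⟨u, hu, hbc, hode⟩ := exists_u hlam (le_mu lam) (mu_le hlam) (cf_RD hf)
    (fun i x hx => cf_supp hf i x hx)
  refine ⟨SS u, SS_contDiff hu, SS_per1 u, SS_per2 u, ?_, ?_⟩
  · intro p hp
    rw [cpd_SS hu]
    have : ∀ i, dd 0 u i (p 0) = 0 := fun i => by
      show deriv (u i) (p 0) = 0
      rcases hp with h | h <;> rw [h]
      · exact (hbc i).1
      · exact (hbc i).2
    simp [SS, this]
  · intro p hp
    have e : ∀ j, cpd j (cpd j (SS u)) p = SS (dd j (dd j u)) p := fun j => by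
      rw [cpd_SS hu, cpd_SS (hu.dd j)]
    have s := fun j => ((hu.dd j).dd j).summable p
    simp only [e, Fin.sum_univ_three]
    have hs := ((hu.summable p).hasSum.mul_left ((lam : ℂ) ^ 2)).sub
      (((s 0).hasSum.add (s 1).hasSum).add (s 2).hasSum)
    refine hs.unique ?_
    convert! cf_hasSum hf p using 1
    funext i
    have h0 : dd 0 (dd 0 u) i (p 0) = deriv (deriv (u i)) (p 0) := rfl
    have h1 : dd 1 (dd 1 u) i (p 0) = (2 * Real.pi * Complex.I * i.1) *
      ((2 * Real.pi * Complex.I * i.1) * u i (p 0)) := rfl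
    have h2 : dd 2 (dd 2 u) i (p 0) = (2 * Real.pi * Complex.I * i.2) *
      ((2 * Real.pi * Complex.I * i.2) * u i (p 0)) := rfl
    rw [h0, h1, h2, hode i _ hp]
    have h3 : (mu lam i : ℂ) ^ 2
        = (lam : ℂ) ^ 2 + 4 * (Real.pi : ℂ) ^ 2 * ((i.1 : ℂ) ^ 2 + (i.2 : ℂ) ^ 2) := by
      exact_mod_cast congrArg (fun t : ℝ => (t : ℂ)) (mu_sq lam i)
    rw [h3]
    have h4 := Complex.I_sq
    linear_combination (-4 * (Real.pi : ℂ) ^ 2 * ((i.1 : ℂ) ^ 2 + (i.2 : ℂ) ^ 2)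
      * u i (p 0) * ee i p) * h4

theorem pd_contDiff {f : E3 → ℝ} (hf : ContDiff ℝ (⊤ : ℕ∞) f) (i : Fin 3) :
    ContDiff ℝ (⊤ : ℕ∞) (pd i f) :=
  (hf.fderiv_right (m := ((⊤ : ℕ∞) : WithTop ℕ∞)) (by simp)).clm_apply contDiff_const

theorem pd_per {f : E3 → ℝ} (hf : PerYZ f) (i : Fin 3) : PerYZ (pd i f) := fun p =>
  ⟨by unfold pd; rw [fderiv_per (fun p => (hf p).1)],
   by unfold pd; rw [fderiv_per (fun p => (hf p).2)]⟩

theorem pd_re {U : E3 → ℂ} (hU : Differentiable ℝ U) (i : Fin 3) :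
    pd i (fun p => (U p).re) = fun p => (cpd i U p).re := by
  funext p
  have h := (Complex.reCLM.hasFDerivAt (x := U p)).comp p (hU p).hasFDerivAt
  unfold pd cpd
  have h' : HasFDerivAt (fun p => (U p).re) (Complex.reCLM.comp (fderiv ℝ U p)) p := h
  rw [h'.fderiv]
  rfl

theorem pd_combo {g h : E3 → ℝ} (hg : Differentiable ℝ g) (hh : Differentiable ℝ h) (c : ℝ)
    (i : Fin 3) (p : E3) :
    pd i (fun p => c * (g p + h p)) p = c * (pd i g p + pd i h p) := by
  have h4 := (((hg p).hasFDerivAt.add (hh p).hasFDerivAt).const_mul c)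
  have h5 : HasFDerivAt (fun p => c * (g p + h p)) (c • (fderiv ℝ g p + fderiv ℝ h p)) p := h4
  unfold pd
  rw [h5.fderiv]
  simp [mul_add]

/-- Surjectivity of `λ - Â` for the constraint propagation operator
`Â(H,M) = (div M, grad H)` on smooth fields satisfying the boundary conditions
`∂₁H = 0`, `M₁ = 0` on the faces `x ∈ {0,1}`. -/
theorem stmt9 (lam : ℝ) (hlam : 0 < lam)
    (F : (Fin 3 → ℝ) → ℝ) (G : Fin 3 → (Fin 3 → ℝ) → ℝ)
    (hFs : ContDiff ℝ (⊤ : ℕ∞) F) (hGs : ∀ i, ContDiff ℝ (⊤ : ℕ∞) (G i))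
    (hFp : PerYZ F) (hGp : ∀ i, PerYZ (G i))
    (hGbc : ∀ p : Fin 3 → ℝ, p 0 = 0 ∨ p 0 = 1 → G 0 p = 0) :
    ∃ (H : (Fin 3 → ℝ) → ℝ) (M : Fin 3 → (Fin 3 → ℝ) → ℝ),
      ContDiff ℝ (⊤ : ℕ∞) H ∧ (∀ i, ContDiff ℝ (⊤ : ℕ∞) (M i)) ∧ PerYZ H ∧ (∀ i, PerYZ (M i)) ∧
      (∀ p : Fin 3 → ℝ, p 0 = 0 ∨ p 0 = 1 → pd 0 H p = 0 ∧ M 0 p = 0) ∧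
      (∀ p : Fin 3 → ℝ, p 0 ∈ Set.Icc (0 : ℝ) 1 →
        lam * H p - ∑ i, pd i (M i) p = F p ∧
        ∀ i, lam * M i p - pd i H p = G i p) := by
  set R : E3 → ℝ := fun p => lam * F p + ∑ i, pd i (G i) p with hR
  have hRs : ContDiff ℝ (⊤ : ℕ∞) R :=
    (contDiff_const.mul hFs).add (ContDiff.sum fun i _ => pd_contDiff (hGs i) i)
  have hRp : PerYZ R := fun p => by
    refine ⟨?_, ?_⟩
    · simp only [hR, (hFp p).1, fun i => (pd_per (hGp i) i p).1]
    · simp only [hR, (hFp p).2, fun i => (pd_per (hGp i) i p).2]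
  let χ : ContDiffBump (0 : ℝ) := ⟨1, 2, by norm_num, by norm_num⟩
  have hχs : ContDiff ℝ (⊤ : ℕ∞) (fun p : E3 => χ (p 0)) :=
    (ContDiffBump.contDiff χ).comp (contDiff_apply ℝ ℝ 0)
  have hgood : Good (fun p => ((χ (p 0) * R p : ℝ) : ℂ)) := by
    refine ⟨Complex.ofRealCLM.contDiff.comp (hχs.mul hRs), ?_, ?_, ?_⟩
    · intro p
      simp [(hRp p).1]
    · intro p
      simp [(hRp p).2]
    · intro p hp
      have : χ (p 0) = 0 := χ.zero_of_le_dist (by simpa [Real.dist_eq] using hp.le)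
      simp [this]
  obtain ⟨U, hUs, hU1, hU2, hUb, hUe⟩ := exists_U hlam hgood
  have hUd : Differentiable ℝ U := hUs.differentiable (by simp)
  have hcs := fun i => contDiff_cpd hUs i
  have hcd : ∀ i, Differentiable ℝ (cpd i U) := fun i => (hcs i).differentiable (by simp)
  have hHs : ContDiff ℝ (⊤ : ℕ∞) (fun p => (U p).re) := Complex.reCLM.contDiff.comp hUs
  have hHp : PerYZ (fun p => (U p).re) := fun p =>
    ⟨by simp only [hU1 p], by simp only [hU2 p]⟩
  have hP := pd_re hUd
  set H : E3 → ℝ := fun p => (U p).re with hH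
  have hl : lam ≠ 0 := hlam.ne'
  have hpdM : ∀ i p, pd i (fun p => lam⁻¹ * (G i p + pd i H p)) p
      = lam⁻¹ * (pd i (G i) p + pd i (pd i H) p) := by
    intro i p
    exact pd_combo ((hGs i).differentiable (by simp))
      ((pd_contDiff hHs i).differentiable (by simp)) _ i p
  refine ⟨H, fun i p => lam⁻¹ * (G i p + pd i H p), hHs,
    fun i => contDiff_const.mul ((hGs i).add (pd_contDiff hHs i)), hHp, ?_, ?_, ?_⟩
  · intro i p
    refine ⟨?_, ?_⟩
    · simp only [(hGp i p).1, (pd_per hHp i p).1]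
    · simp only [(hGp i p).2, (pd_per hHp i p).2]
  · intro p hp
    have h0 : pd 0 H p = 0 := by rw [hP]; simp [hUb p hp]
    exact ⟨h0, by simp [h0, hGbc p hp]⟩
  · intro p hp
    refine ⟨?_, fun i => by field_simp; ring⟩
    have hχ1 : χ (p 0) = 1 := by
      refine χ.one_of_mem_closedBall ?_
      rw [Metric.mem_closedBall, Real.dist_eq, sub_zero, abs_of_nonneg hp.1]
      exact hp.2
    have key := congrArg Complex.re (hUe p hp)
    have hpp : ∀ i, pd i (pd i H) p = (cpd i (cpd i U) p).re := fun i => by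
      rw [hP, pd_re (hcd i)]
    have hl2 : ((lam : ℂ) ^ 2 * U p).re = lam ^ 2 * H p := by
      rw [← Complex.ofReal_pow, Complex.re_ofReal_mul]
    rw [Complex.sub_re, hl2, Complex.re_sum, hχ1, one_mul, Complex.ofReal_re] at key
    simp only [← hpp, hR] at key
    simp only [hpdM, ← Finset.mul_sum, Finset.sum_add_distrib]
    field_simp
    linarith
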